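/- There is an absolute constant C > 0 such that for every t ∈ [0,1], every integer N ≥ 0, and all reals K ≥ 1 and M ≥ 1 the following holds. Define, for L > 0, F_L := { s ∈ ℝ : max_{0 ≤ n ≤ N} f_{n,t}(s) > L }. Then |F_{4KM}| ≤ C · K · |F_K| · |F_M|, where |·| denotes Lebesgue measure. -/

import Mathlib

open MeasureTheory

/-- The weight `w(0)=0, w(1)=t, w(2)=1`. -/
noncomputable def wgt (t : ℝ) : Fin 3 → ℝ := ![0, t, 1]

open scoped Classical in
/-- The projection multiplicity function `f_{n,t}(s)`: the number of digit strings
`a ∈ {0,1,2}^n` with `|s - ∑_{k=1}^n w(a_k) 3^{-k}| ≤ 3^{-n}`. -/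
noncomputable def multFn (t : ℝ) (n : ℕ) (s : ℝ) : ℕ :=
  (Finset.univ.filter (fun a : Fin n → Fin 3 =>
    |s - ∑ k : Fin n, wgt t (a k) * (3 : ℝ) ^ (-(k.1 + 1 : ℤ))| ≤ (3 : ℝ) ^ (-(n : ℤ)))).card

/-- `max_{0 ≤ n ≤ N} f_{n,t}(s)`. -/
noncomputable def multFnStar (t : ℝ) (N : ℕ) (s : ℝ) : ℕ :=
  (Finset.range (N + 1)).sup fun n => multFn t n s

/-!
The proof is a stopping-time argument on triadic intervals. Call an interval of generation `n + 1`
heavy if at one of its points more than `K` words of length `n` are close in a slightly narrowed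
sense; widening the window back to its full size gives `f_n > K` on the whole interval, so the
maximal heavy intervals are disjoint subsets of `F_K`. If `Q` is such an interval, of generation
`m + 2`, then its parent is not heavy, so over `Q` at most `K` words of length `m` matter. By
self-similarity `f_{m+k}` is on `Q` a sum of at most `K` rescaled copies of `f_k`, and where it
exceeds `K M` one of the copies exceeds `M`. Hence `F_{4KM} ∩ Q` is covered by at most `K` copies
of `F_M`, each contracted by `3^{-m} = 9 |Q|`.
-/

section StoppingTime

variable {α ι : Type*} [MeasurableSpace α] [Countable ι] {μ : Measure α} {F : Set α} {c : ENNReal}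

theorem measure_le_mul_measure_iUnion_of_forall_inter_le {D : ι → Set α}
    (hdisj : Pairwise (Function.onFun Disjoint D)) (hmeas : ∀ i, MeasurableSet (D i))
    (hcover : F ⊆ ⋃ i, D i) (hle : ∀ i, μ (F ∩ D i) ≤ c * μ (D i)) :
    μ F ≤ c * μ (⋃ i, D i) :=
  calc
    μ F = μ (⋃ i, F ∩ D i) := by rw [← Set.inter_iUnion, Set.inter_eq_left.2 hcover]
    _ ≤ ∑' i, μ (F ∩ D i) := measure_iUnion_le _
    _ ≤ ∑' i, c * μ (D i) := ENNReal.tsum_le_tsum hle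
    _ = c * μ (⋃ i, D i) := by rw [ENNReal.tsum_mul_left, measure_iUnion hdisj hmeas]

theorem measure_le_mul_of_first_cell {π : ℕ → α → ι} {H : ℕ → ι → Prop}
    (hmeas : ∀ n i, MeasurableSet (π n ⁻¹' {i}))
    (hnest : ∀ m n x y, m ≤ n → π n x = π n y → π m x = π m y)
    (hcover : ∀ x ∈ F, ∃ n, H n (π n x))
    (hle : ∀ n x, H n (π n x) → (∀ m < n, ¬ H m (π m x)) →
      μ (F ∩ π n ⁻¹' {π n x}) ≤ c * μ (π n ⁻¹' {π n x})) :
    μ F ≤ c * μ {x | ∃ n, H n (π n x)} := by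
  classical
  let IsFirst (n : ℕ) (x : α) : Prop := H n (π n x) ∧ ∀ m < n, ¬ H m (π m x)
  let D (p : ℕ × ι) : Set α := {x | IsFirst p.1 x ∧ π p.1 x = p.2}
  have isFirst_congr {n x y} (hxy : π n x = π n y) (hx : IsFirst n x) : IsFirst n y :=
    ⟨hxy ▸ hx.1, fun m hm => hnest m n x y hm.le hxy ▸ hx.2 m hm⟩
  have eq_empty_or_cell (p) : D p = ∅ ∨ ∃ x, IsFirst p.1 x ∧ D p = π p.1 ⁻¹' {π p.1 x} := by
    refine (D p).eq_empty_or_nonempty.imp_right ?_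
    rintro ⟨x, hx, hxp⟩
    refine ⟨x, hx, Set.ext fun y => ⟨fun hy => hy.2.trans hxp.symm, fun hy => ?_⟩⟩
    exact ⟨isFirst_congr (Eq.symm hy) hx, Eq.trans hy hxp⟩
  have iUnion_eq : ⋃ p, D p = {x | ∃ n, H n (π n x)} := by
    refine Set.Subset.antisymm (Set.iUnion_subset fun p x hx => ⟨p.1, hx.1.1⟩) fun x hx => ?_
    exact Set.mem_iUnion.2 ⟨(Nat.find hx, π (Nat.find hx) x),
      ⟨Nat.find_spec hx, fun m hm => Nat.find_min hx hm⟩, rfl⟩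
  rw [← iUnion_eq]
  apply measure_le_mul_measure_iUnion_of_forall_inter_le
  · rintro ⟨m, i⟩ ⟨n, j⟩ hne
    refine Set.disjoint_left.2 fun x ⟨hm, hi⟩ ⟨hn, hj⟩ => hne ?_
    obtain rfl : m = n := le_antisymm (not_lt.1 fun h => hm.2 n h hn.1)
      (not_lt.1 fun h => hn.2 m h hm.1)
    exact Prod.ext rfl (hi.symm.trans hj)
  · intro p
    obtain h | ⟨x, -, h⟩ := eq_empty_or_cell p
    · exact h ▸ MeasurableSet.empty
    · exact h ▸ hmeas p.1 _
  · exact fun x hx => iUnion_eq ▸ hcover x hx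
  · intro p
    obtain h | ⟨x, hx, h⟩ := eq_empty_or_cell p
    · simp [h]
    · exact h ▸ hle p.1 x hx.1 hx.2

end StoppingTime

section TriadicIntervals

/-- The index `j` of the half-open triadic interval `[j 3^{-n}, (j + 1) 3^{-n})` of generation `n`
that contains `s`. The interval itself is the fiber of this function. -/
noncomputable def triadicIndex (n : ℕ) (s : ℝ) : ℤ := ⌊(3 : ℝ) ^ n * s⌋

variable {m n : ℕ} {s s' : ℝ}

theorem triadicIndex_eq_ediv (n k : ℕ) (s : ℝ) :
    triadicIndex n s = triadicIndex (n + k) s / ((3 ^ k : ℕ) : ℤ) := by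
  rw [triadicIndex, triadicIndex, ← Int.floor_div_natCast]
  congr 1
  push_cast
  field_simp
  ring

theorem triadicIndex_eq_of_le (hmn : m ≤ n) (h : triadicIndex n s = triadicIndex n s') :
    triadicIndex m s = triadicIndex m s' := by
  obtain ⟨k, rfl⟩ := Nat.exists_eq_add_of_le hmn
  rw [triadicIndex_eq_ediv m k, triadicIndex_eq_ediv m k, h]

theorem abs_pow_mul_sub_le_of_triadicIndex_eq {k : ℕ}
    (h : triadicIndex (n + k) s = triadicIndex (n + k) s') :
    |3 ^ n * (s - s')| ≤ ((3 : ℝ) ^ k)⁻¹ := by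
  have hk : (0 : ℝ) < 3 ^ k := by positivity
  have hlt : |3 ^ (n + k) * s - 3 ^ (n + k) * s'| < 1 := Int.abs_sub_lt_one_of_floor_eq_floor h
  rw [← mul_sub, pow_add, mul_right_comm, abs_mul, abs_of_pos hk] at hlt
  rw [← one_div, le_div_iff₀ hk]
  exact hlt.le

theorem triadicIndex_preimage_singleton (n : ℕ) (j : ℤ) :
    triadicIndex n ⁻¹' {j} = Set.Ico ((j : ℝ) / 3 ^ n) ((j + 1) / 3 ^ n) := by
  have hn : (0 : ℝ) < 3 ^ n := by positivity
  ext s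
  simp only [triadicIndex, Set.mem_preimage, Set.mem_singleton_iff, Int.floor_eq_iff, Set.mem_Ico,
    div_le_iff₀' hn, lt_div_iff₀' hn]

theorem volume_triadicIndex_preimage_singleton (n : ℕ) (j : ℤ) :
    volume (triadicIndex n ⁻¹' {j}) = ENNReal.ofReal ((3 ^ n)⁻¹) := by
  rw [triadicIndex_preimage_singleton, Real.volume_Ico]
  congr 1
  ring

end TriadicIntervals

section Words

variable {t r r' δ s s' : ℝ} {m n : ℕ}

/-- The point `∑ w(a_k) 3^{-k}` coded by the word `a`. -/
noncomputable def wordPoint (t : ℝ) {n : ℕ} (a : Fin n → Fin 3) : ℝ :=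
  ∑ k : Fin n, wgt t (a k) * (3 : ℝ) ^ (-(k.1 + 1 : ℤ))

/-- The expanding similarity of ratio `3^n` sending the point coded by `a` to the origin: the
inverse of the contraction that maps the projected gasket onto its piece coded by `a`. -/
noncomputable def blowUp (t : ℝ) {n : ℕ} (a : Fin n → Fin 3) (s : ℝ) : ℝ :=
  3 ^ n * (s - wordPoint t a)

open scoped Classical in
/-- The words of length `n` whose points lie within `r 3^{-n}` of `s`. The multiplicity function
counts them for `r = 1`; a smaller radius leaves room for moving `s`. -/
noncomputable def nearbyWords (t r : ℝ) (n : ℕ) (s : ℝ) : Finset (Fin n → Fin 3) :=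
  Finset.univ.filter fun a => |blowUp t a s| ≤ r

theorem mem_nearbyWords {a : Fin n → Fin 3} : a ∈ nearbyWords t r n s ↔ |blowUp t a s| ≤ r := by
  simp [nearbyWords]

theorem abs_blowUp_le_one_iff {a : Fin n → Fin 3} :
    |blowUp t a s| ≤ 1 ↔ |s - wordPoint t a| ≤ ((3 : ℝ) ^ n)⁻¹ := by
  have hn : (0 : ℝ) < 3 ^ n := by positivity
  rw [blowUp, abs_mul, abs_of_pos hn, ← le_div_iff₀' hn, one_div]

theorem wordPoint_append (t : ℝ) (a : Fin n → Fin 3) (b : Fin m → Fin 3) :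
    wordPoint t (Fin.append a b) = wordPoint t a + ((3 : ℝ) ^ n)⁻¹ * wordPoint t b := by
  simp only [wordPoint, Fin.sum_univ_add, Fin.append_left, Fin.append_right, Fin.val_castAdd,
    Fin.val_natAdd, Finset.mul_sum]
  congr 1
  refine Finset.sum_congr rfl fun k _ => ?_
  rw [show -(((n + k.1 : ℕ) : ℤ) + 1) = -(n : ℤ) + -(k.1 + 1 : ℤ) by push_cast; ring,
    zpow_add₀ three_ne_zero, zpow_neg, zpow_natCast]
  ring

theorem blowUp_append (t : ℝ) (a : Fin n → Fin 3) (b : Fin m → Fin 3) (s : ℝ) :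
    blowUp t (Fin.append a b) s = blowUp t b (blowUp t a s) := by
  simp only [blowUp, wordPoint_append, pow_add]
  field_simp
  ring

theorem volume_blowUp_preimage (t : ℝ) (a : Fin n → Fin 3) (A : Set ℝ) :
    volume (blowUp t a ⁻¹' A) = ENNReal.ofReal ((3 ^ n)⁻¹) * volume A := by
  have hn : (0 : ℝ) < 3 ^ n := by positivity
  calc
    volume (blowUp t a ⁻¹' A) = volume ((· - wordPoint t a) ⁻¹' ((3 ^ n * ·) ⁻¹' A)) := rfl
    _ = volume ((3 ^ n * ·) ⁻¹' A) := by
      simp only [sub_eq_add_neg, measure_preimage_add_right]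
    _ = ENNReal.ofReal ((3 ^ n)⁻¹) * volume A := by
      rw [Real.volume_preimage_mul_left hn.ne', abs_of_pos (inv_pos.2 hn)]

theorem nearbyWords_mono (h : r ≤ r') : nearbyWords t r n s ⊆ nearbyWords t r' n s :=
  fun _ ha => mem_nearbyWords.2 ((mem_nearbyWords.1 ha).trans h)

theorem nearbyWords_subset_of_abs_le (h : |3 ^ n * (s - s')| ≤ δ) :
    nearbyWords t r n s' ⊆ nearbyWords t (r + δ) n s := by
  intro a ha
  rw [mem_nearbyWords] at ha ⊢
  calc
    |blowUp t a s| = |blowUp t a s' + 3 ^ n * (s - s')| := by simp only [blowUp]; ring_nf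
    _ ≤ |blowUp t a s'| + |3 ^ n * (s - s')| := abs_add_le _ _
    _ ≤ r + δ := add_le_add ha h

theorem wgt_mem_Icc (ht : t ∈ Set.Icc (0 : ℝ) 1) (d : Fin 3) : wgt t d ∈ Set.Icc (0 : ℝ) 1 := by
  fin_cases d <;> simp [wgt, ht.1, ht.2]

theorem sum_zpow_neg_succ (n : ℕ) :
    ∑ k : Fin n, (3 : ℝ) ^ (-(k.1 + 1 : ℤ)) = (1 - ((3 : ℝ) ^ n)⁻¹) / 2 := by
  induction n with
  | zero => simp
  | succ n ih =>
    rw [Fin.sum_univ_castSucc]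
    simp only [Fin.val_castSucc, Fin.val_last, ih]
    rw [zpow_neg, zpow_add_one₀ three_ne_zero, zpow_natCast]
    field_simp
    ring

theorem wordPoint_mem_Icc (ht : t ∈ Set.Icc (0 : ℝ) 1) (a : Fin n → Fin 3) :
    wordPoint t a ∈ Set.Icc 0 ((1 - ((3 : ℝ) ^ n)⁻¹) / 2) := by
  refine ⟨Finset.sum_nonneg fun k _ => mul_nonneg (wgt_mem_Icc ht _).1 (by positivity), ?_⟩
  rw [← sum_zpow_neg_succ]
  exact Finset.sum_le_sum fun k _ => mul_le_of_le_one_left (by positivity) (wgt_mem_Icc ht _).2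

end Words

section Multiplicity

variable {t s : ℝ} {m n N : ℕ}

theorem multFn_eq_card_nearbyWords (t : ℝ) (n : ℕ) (s : ℝ) :
    multFn t n s = (nearbyWords t 1 n s).card := by
  refine congrArg Finset.card (Finset.filter_congr fun a _ => ?_)
  rw [abs_blowUp_le_one_iff, zpow_neg, zpow_natCast, wordPoint]

theorem multFn_le_pow (t : ℝ) (n : ℕ) (s : ℝ) : multFn t n s ≤ 3 ^ n := by
  rw [multFn_eq_card_nearbyWords]
  exact (Finset.card_le_univ _).trans (by simp)

theorem ne_zero_of_one_lt_multFn (h : 1 < (multFn t n s : ℝ)) : n ≠ 0 := by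
  rintro rfl
  exact (multFn_le_pow t 0 s).not_gt (by exact_mod_cast h)

theorem multFn_add (t : ℝ) (n m : ℕ) (s : ℝ) :
    multFn t (n + m) s = ∑ a : Fin n → Fin 3, multFn t m (blowUp t a s) := by
  classical
  simp only [multFn_eq_card_nearbyWords, nearbyWords, Finset.card_filter]
  rw [← Fintype.sum_prod_type', ← (Fin.appendEquiv n m).sum_comp]
  refine Finset.sum_congr rfl fun p _ => ?_
  rw [← blowUp_append]
  rfl

theorem abs_le_of_multFn_ne_zero (ht : t ∈ Set.Icc (0 : ℝ) 1) (h : multFn t n s ≠ 0) :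
    |s| ≤ (1 + ((3 : ℝ) ^ n)⁻¹) / 2 := by
  rw [multFn_eq_card_nearbyWords, Finset.card_ne_zero] at h
  obtain ⟨a, ha⟩ := h
  have hn_inv : ((3 : ℝ) ^ n)⁻¹ ≤ 1 := inv_le_one_of_one_le₀ (one_le_pow₀ (by norm_num))
  have hsa : |s - wordPoint t a| ≤ ((3 : ℝ) ^ n)⁻¹ :=
    abs_blowUp_le_one_iff.1 (mem_nearbyWords.1 ha)
  obtain ⟨hlo, hhi⟩ := wordPoint_mem_Icc ht a
  rw [abs_le] at hsa ⊢
  constructor <;> linarith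

theorem multFn_add_eq_sum_of_nearbyWords_subset (ht : t ∈ Set.Icc (0 : ℝ) 1)
    {W : Finset (Fin n → Fin 3)} (hW : nearbyWords t ((1 + ((3 : ℝ) ^ m)⁻¹) / 2) n s ⊆ W) :
    multFn t (n + m) s = ∑ a ∈ W, multFn t m (blowUp t a s) := by
  rw [multFn_add]
  refine (Finset.sum_subset (Finset.subset_univ _) fun a _ ha => ?_).symm
  by_contra hne
  exact ha (hW (mem_nearbyWords.2 (abs_le_of_multFn_ne_zero ht hne)))

theorem multFn_succ_le (ht : t ∈ Set.Icc (0 : ℝ) 1) :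
    multFn t (n + 1) s ≤ 3 * (nearbyWords t (2 / 3) n s).card := by
  rw [multFn_add_eq_sum_of_nearbyWords_subset ht
    (nearbyWords_mono (r' := 2 / 3) (by norm_num)), mul_comm]
  exact Finset.sum_le_card_nsmul _ _ 3 fun a _ => multFn_le_pow t 1 _

theorem multFn_le_multFnStar (t : ℝ) (h : n ≤ N) (s : ℝ) : multFn t n s ≤ multFnStar t N s :=
  Finset.le_sup (f := fun n => multFn t n s) (Finset.mem_range_succ_iff.2 h)

theorem exists_multFnStar_eq (t : ℝ) (N : ℕ) (s : ℝ) :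
    ∃ n ≤ N, multFnStar t N s = multFn t n s := by
  obtain ⟨n, hn, h⟩ := Finset.exists_mem_eq_sup (Finset.range (N + 1)) Finset.nonempty_range_add_one
    (fun n => multFn t n s)
  exact ⟨n, Finset.mem_range_succ_iff.1 hn, h⟩

end Multiplicity

section HeavyCells

variable {t K L M s s₀ : ℝ} {k m n N : ℕ}

/-- The triadic interval of generation `n + 1` with index `j` is heavy if at one of its points more
than `K` words of length `n` are near. Radius `2 / 3` plus the length `1 / 3` of the interval, in
units of `3^{-n}`, is the radius `1` of the multiplicity function. -/
def IsHeavyCell (t K : ℝ) (n : ℕ) (j : ℤ) : Prop :=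
  ∃ s, triadicIndex (n + 1) s = j ∧ K < (nearbyWords t (2 / 3) n s).card

theorem IsHeavyCell.lt_multFn (h : IsHeavyCell t K n (triadicIndex (n + 1) s)) :
    K < multFn t n s := by
  obtain ⟨s', hs', hK⟩ := h
  have hsub : nearbyWords t (2 / 3) n s' ⊆ nearbyWords t 1 n s :=
    (nearbyWords_subset_of_abs_le (abs_pow_mul_sub_le_of_triadicIndex_eq hs'.symm)).trans
      (nearbyWords_mono (by norm_num))
  rw [multFn_eq_card_nearbyWords]
  exact hK.trans_le (Nat.cast_le.2 (Finset.card_le_card hsub))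

theorem exists_isHeavyCell_of_lt_multFn (ht : t ∈ Set.Icc (0 : ℝ) 1) (hK : 1 ≤ K)
    (h : 3 * K < multFn t n s) :
    ∃ q, n = q + 1 ∧ IsHeavyCell t K q (triadicIndex (q + 1) s) := by
  obtain ⟨q, rfl⟩ := Nat.exists_eq_succ_of_ne_zero
    (ne_zero_of_one_lt_multFn (show 1 < (multFn t n s : ℝ) by linarith))
  have hle : (multFn t (q + 1) s : ℝ) ≤ 3 * (nearbyWords t (2 / 3) q s).card := by
    exact_mod_cast multFn_succ_le ht
  exact ⟨q, rfl, s, rfl, by linarith⟩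

theorem card_nearbyWords_le_of_not_isHeavyCell
    (h : ¬ IsHeavyCell t K n (triadicIndex (n + 1) s)) :
    ((nearbyWords t (2 / 3) n s).card : ℝ) ≤ K :=
  not_lt.1 fun hK => h ⟨s, rfl, hK⟩

theorem not_isHeavyCell_zero (hK : 1 ≤ K) : ¬ IsHeavyCell t K 0 (triadicIndex 1 s) :=
  fun h => ne_zero_of_one_lt_multFn (hK.trans_lt h.lt_multFn) rfl

theorem multFn_add_eq_sum_of_triadicIndex_eq (ht : t ∈ Set.Icc (0 : ℝ) 1)
    (hs : triadicIndex (m + 2) s = triadicIndex (m + 2) s₀) :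
    multFn t (m + (k + 2)) s =
      ∑ a ∈ nearbyWords t (2 / 3) m s₀, multFn t (k + 2) (blowUp t a s) := by
  -- In units of `3^{-m}`, `f_{k+2}` is supported within `5/9` of the origin and moving from `s` to
  -- `s₀` costs at most `1/9`; with one generation less the sum would exceed the radius `2/3`.
  have hk : ((3 : ℝ) ^ (k + 2))⁻¹ ≤ (3 ^ 2)⁻¹ :=
    inv_anti₀ (by norm_num) (pow_le_pow_right₀ (by norm_num) (by lia))
  refine multFn_add_eq_sum_of_nearbyWords_subset ht ?_
  exact (nearbyWords_subset_of_abs_le (abs_pow_mul_sub_le_of_triadicIndex_eq hs.symm)).trans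
    (nearbyWords_mono (by linarith))

theorem exists_lt_multFn_blowUp (ht : t ∈ Set.Icc (0 : ℝ) 1) (hM : 0 ≤ M)
    (hcard : ((nearbyWords t (2 / 3) m s₀).card : ℝ) ≤ K)
    (hs : triadicIndex (m + 2) s = triadicIndex (m + 2) s₀)
    (h : K * M < multFn t (m + (k + 2)) s) :
    ∃ a ∈ nearbyWords t (2 / 3) m s₀, M < multFn t (k + 2) (blowUp t a s) := by
  by_contra! hle
  refine h.not_ge ?_
  rw [multFn_add_eq_sum_of_triadicIndex_eq ht hs, Nat.cast_sum]
  calc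
    ∑ a ∈ nearbyWords t (2 / 3) m s₀, (multFn t (k + 2) (blowUp t a s) : ℝ)
      ≤ (nearbyWords t (2 / 3) m s₀).card • M := Finset.sum_le_card_nsmul _ _ _ hle
    _ ≤ K * M := by
      rw [nsmul_eq_mul]
      exact mul_le_mul_of_nonneg_right hcard hM

theorem superlevel_inter_cell_subset (ht : t ∈ Set.Icc (0 : ℝ) 1) (hK : 1 ≤ K) (hM : 0 ≤ M)
    (hKL : 3 * K ≤ L) (hKML : K * M ≤ L)
    (hlight : ∀ k ≤ m, ¬ IsHeavyCell t K k (triadicIndex (k + 1) s₀)) :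
    {s | L < multFnStar t N s} ∩ triadicIndex (m + 2) ⁻¹' {triadicIndex (m + 2) s₀} ⊆
      ⋃ a ∈ nearbyWords t (2 / 3) m s₀, blowUp t a ⁻¹' {s | M < multFnStar t N s} := by
  rintro s ⟨hL : L < multFnStar t N s, hs : triadicIndex (m + 2) s = triadicIndex (m + 2) s₀⟩
  obtain ⟨p, hpN, hp⟩ := exists_multFnStar_eq t N s
  rw [hp] at hL
  obtain ⟨q, rfl, hq⟩ := exists_isHeavyCell_of_lt_multFn ht hK (hKL.trans_lt hL)
  have hmq : m < q := by
    by_contra! hqm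
    rw [triadicIndex_eq_of_le (show q + 1 ≤ m + 2 by lia) hs] at hq
    exact hlight q hqm hq
  obtain ⟨k, hk⟩ : ∃ k, q + 1 = m + (k + 2) := ⟨q - m - 1, by lia⟩
  rw [hk] at hL
  obtain ⟨a, ha, hMa⟩ := exists_lt_multFn_blowUp ht hM
    (card_nearbyWords_le_of_not_isHeavyCell (hlight m le_rfl)) hs (hKML.trans_lt hL)
  have hstar := multFn_le_multFnStar t (show k + 2 ≤ N by lia) (blowUp t a s)
  exact Set.mem_biUnion ha (hMa.trans_le (Nat.cast_le.2 hstar))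

theorem volume_biUnion_nearbyWords_le (A : Set ℝ)
    (hcard : ((nearbyWords t (2 / 3) m s₀).card : ℝ) ≤ K) :
    volume (⋃ a ∈ nearbyWords t (2 / 3) m s₀, blowUp t a ⁻¹' A) ≤
      ENNReal.ofReal (9 * K) * volume A *
        volume (triadicIndex (m + 2) ⁻¹' {triadicIndex (m + 2) s₀}) :=
  calc
    volume (⋃ a ∈ nearbyWords t (2 / 3) m s₀, blowUp t a ⁻¹' A)
      ≤ ∑ a ∈ nearbyWords t (2 / 3) m s₀, volume (blowUp t a ⁻¹' A) :=
        measure_biUnion_finset_le _ _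
    _ = (nearbyWords t (2 / 3) m s₀).card * (ENNReal.ofReal ((3 ^ m)⁻¹) * volume A) := by
        simp only [volume_blowUp_preimage, Finset.sum_const, nsmul_eq_mul]
    _ ≤ ENNReal.ofReal K * (ENNReal.ofReal ((3 ^ m)⁻¹) * volume A) := by
        gcongr
        exact ENNReal.ofReal_natCast _ ▸ ENNReal.ofReal_le_ofReal hcard
    _ = ENNReal.ofReal (9 * K) * volume A *
        volume (triadicIndex (m + 2) ⁻¹' {triadicIndex (m + 2) s₀}) := by
        have hK : 0 ≤ K := (Nat.cast_nonneg _).trans hcard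
        rw [volume_triadicIndex_preimage_singleton, mul_right_comm, ← mul_assoc,
          ← ENNReal.ofReal_mul hK, ← ENNReal.ofReal_mul (by positivity)]
        congr 2
        rw [pow_add]
        field_simp
        norm_num

theorem volume_superlevel_inter_cell_le (ht : t ∈ Set.Icc (0 : ℝ) 1) (hK : 1 ≤ K) (hM : 0 ≤ M)
    (hKL : 3 * K ≤ L) (hKML : K * M ≤ L)
    (hheavy : IsHeavyCell t K n (triadicIndex (n + 1) s₀))
    (hfirst : ∀ k < n, ¬ IsHeavyCell t K k (triadicIndex (k + 1) s₀)) :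
    volume ({s | L < multFnStar t N s} ∩
        triadicIndex (n + 1) ⁻¹' {triadicIndex (n + 1) s₀}) ≤
      ENNReal.ofReal (9 * K) * volume {s | M < multFnStar t N s} *
        volume (triadicIndex (n + 1) ⁻¹' {triadicIndex (n + 1) s₀}) := by
  cases n with
  | zero => exact absurd hheavy (not_isHeavyCell_zero hK)
  | succ m =>
    have hlight : ∀ k ≤ m, ¬ IsHeavyCell t K k (triadicIndex (k + 1) s₀) := fun k hk =>
      hfirst k (Nat.lt_succ_of_le hk)
    exact (measure_mono (superlevel_inter_cell_subset ht hK hM hKL hKML hlight)).trans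
      (volume_biUnion_nearbyWords_le _
        (card_nearbyWords_le_of_not_isHeavyCell (hlight m le_rfl)))

theorem exists_isHeavyCell_of_lt_multFnStar (ht : t ∈ Set.Icc (0 : ℝ) 1) (hK : 1 ≤ K)
    (h : 3 * K < multFnStar t N s) :
    ∃ n, n ≤ N ∧ IsHeavyCell t K n (triadicIndex (n + 1) s) := by
  obtain ⟨p, hpN, hp⟩ := exists_multFnStar_eq t N s
  rw [hp] at h
  obtain ⟨n, rfl, hn⟩ := exists_isHeavyCell_of_lt_multFn ht hK h
  exact ⟨n, by lia, hn⟩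

end HeavyCells

theorem level_set_submultiplicative_general {t K L M : ℝ} (ht : t ∈ Set.Icc (0 : ℝ) 1) (N : ℕ)
    (hK : 1 ≤ K) (hM : 0 ≤ M) (hKL : 3 * K ≤ L) (hKML : K * M ≤ L) :
    volume {s | L < multFnStar t N s} ≤
      ENNReal.ofReal (9 * K) * volume {s | K < multFnStar t N s} *
        volume {s | M < multFnStar t N s} := by
  let H (n : ℕ) (j : ℤ) : Prop := n ≤ N ∧ IsHeavyCell t K n j
  have hsub : {s | ∃ n, H n (triadicIndex (n + 1) s)} ⊆ {s | K < multFnStar t N s} := by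
    rintro s ⟨n, hnN, hheavy⟩
    exact hheavy.lt_multFn.trans_le (Nat.cast_le.2 (multFn_le_multFnStar t hnN s))
  have hcells : volume {s | L < multFnStar t N s} ≤
      ENNReal.ofReal (9 * K) * volume {s | M < multFnStar t N s} *
        volume {s | ∃ n, H n (triadicIndex (n + 1) s)} := by
    refine measure_le_mul_of_first_cell (π := fun n => triadicIndex (n + 1)) (fun n j => ?_)
      (fun m n _ _ hmn => triadicIndex_eq_of_le (by lia))
      (fun s hs => exists_isHeavyCell_of_lt_multFnStar ht hK (hKL.trans_lt hs))
      fun n s hheavy hfirst => volume_superlevel_inter_cell_le ht hK hM hKL hKML hheavy.2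
        fun k hk hk_heavy => hfirst k hk ⟨hk.le.trans hheavy.1, hk_heavy⟩
    exact triadicIndex_preimage_singleton (n + 1) j ▸ measurableSet_Ico
  rw [mul_right_comm]
  exact hcells.trans (by gcongr)

/-- Submultiplicativity of level sets of the maximal multiplicity function:
`|F_{4KM}| ≤ C·K·|F_K|·|F_M|` where `F_L = {f_N^* > L}`. -/
theorem level_set_submultiplicative :
    ∃ C > (0:ℝ), ∀ t ∈ Set.Icc (0:ℝ) 1, ∀ N : ℕ, ∀ K M : ℝ, 1 ≤ K → 1 ≤ M →
      volume {s : ℝ | 4 * K * M < (multFnStar t N s : ℝ)} ≤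
        ENNReal.ofReal (C * K) *
          volume {s : ℝ | K < (multFnStar t N s : ℝ)} *
          volume {s : ℝ | M < (multFnStar t N s : ℝ)} := by
  refine ⟨9, by norm_num, fun t ht N K M hK hM => ?_⟩
  exact level_set_submultiplicative_general ht N hK (by linarith) (by nlinarith) (by nlinarith)
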